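/- arXiv:2003.12926 — 7 statements merged into one kernel-verified Lean document; each statement's English description precedes it below -/
import Mathlib

section
/- For every integer n ≥ 3, the seven-fold convolution ∑_{i₁+⋯+i₇=n, iⱼ≥0} (2n)!/((2i₁)!⋯(2i₇)!) · 𝔠_{2i₁}⋯𝔠_{2i₇} = binom(2n-1, 6) · 𝔠_{2n} + (12n²-60n+83)/15 · binom(2n, 2) binom(2n-3, 4) · 𝔠_{2n-2} + (4n²-24n+39)(12n²-72n+109)/15 · binom(2n, 4) binom(2n-5, 2) · 𝔠_{2n-4} + binom(2n, 6)(2n-7)⁶ · 𝔠_{2n-6}. -/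
/-- Stirling numbers of the first kind with level 2. -/
def T2 : ℕ → ℕ → ℕ
  | 0, 0 => 1
  | 0, _ + 1 => 0
  | _ + 1, 0 => 0
  | n + 1, m + 1 => T2 n m + n ^ 2 * T2 n (m + 1)

/-- Cauchy numbers with level 2: `cauchy2 n = 𝔠_{2n}`. -/
def cauchy2 (n : ℕ) : ℚ :=
  ∑ m ∈ Finset.range (n + 1), (-4 : ℚ) ^ (n - m) * (T2 n m : ℚ) / (2 * (m : ℚ) + 1)

/-- `odFact i = (2i-1)!!`, with `odFact 0 = (-1)!! = 1`. -/
def odFact : ℕ → ℚ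
  | 0 => 1
  | i + 1 => (2 * (i : ℚ) + 1) * odFact i

/-- `ddf j = (2j-1)!!`, the odd double factorial extended to all integers:
for `j ≥ 0` it is `(2j-1)(2j-3)⋯1` (with `(-1)!! = 1`), and for `j = -i < 0`
it is `(-(2i+1))!! = (-1)^i/(2i-1)!!`. -/
def ddf (j : ℤ) : ℚ :=
  if 0 ≤ j then odFact j.toNat else (-1 : ℚ) ^ (-j).toNat / odFact (-j).toNat


theorem C_two' : (PowerSeries.C (2 : ℚ)) = 2 := map_ofNat _ 2

open PowerSeries in
theorem coeff_theta (A : ℚ⟦X⟧) (N : ℕ) : coeff N (X * d⁄dX ℚ A) = N * coeff N A := by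
  cases N with
  | zero => simp
  | succ n => rw [coeff_succ_X_mul, coeff_derivative]; push_cast; ring

open PowerSeries in
noncomputable def LLop (A : ℚ⟦X⟧) : ℚ⟦X⟧ := (1 + X ^ 2) * d⁄dX ℚ (d⁄dX ℚ A) + X * d⁄dX ℚ A

open PowerSeries in
theorem coeff_LLop (A : ℚ⟦X⟧) (N : ℕ) : coeff N (LLop A) =
    (N + 2) * (N + 1) * coeff (N + 2) A + N ^ 2 * coeff N A := by
  have h : LLop A = d⁄dX ℚ (d⁄dX ℚ A) + X * d⁄dX ℚ (X * d⁄dX ℚ A) := by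
    simp only [LLop, Derivation.leibniz, derivative_X, smul_eq_mul]; ring
  rw [h, map_add, coeff_theta, coeff_theta, coeff_derivative, coeff_derivative]
  push_cast; ring

/-- coefficients of arsinh -/
noncomputable def asc : ℕ → ℚ
  | 0 => 0
  | 1 => 1
  | N + 2 => - (N : ℚ) ^ 2 * asc N / ((N + 2) * (N + 1))

open PowerSeries in
noncomputable def uu : ℚ⟦X⟧ := PowerSeries.mk asc

open PowerSeries in
theorem LL_uu : LLop uu = 0 := by
  ext N
  rw [coeff_LLop]
  simp only [uu, coeff_mk, asc, map_zero]
  field_simp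
  ring

open PowerSeries in
theorem uu_ode : (1 + X ^ 2) * d⁄dX ℚ (d⁄dX ℚ uu) = - (X * d⁄dX ℚ uu) := by
  have := LL_uu
  unfold LLop at this
  linear_combination this

open PowerSeries in
theorem uu_sq : (1 + X ^ 2) * (d⁄dX ℚ uu) ^ 2 = 1 := by
  apply PowerSeries.derivative.ext
  · have := uu_ode
    simp only [Derivation.leibniz, derivative_X, smul_eq_mul, Derivation.leibniz_pow, map_add, Derivation.map_one_eq_zero, nsmul_eq_mul]
    push_cast
    linear_combination 2 * (d⁄dX ℚ uu) * this
  · have : constantCoeff (d⁄dX ℚ uu) = 1 := by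
      rw [← coeff_zero_eq_constantCoeff_apply, coeff_derivative]; simp [uu, asc]
    simp [this]

open PowerSeries in
theorem LL_pow (k : ℕ) : LLop (uu ^ (k + 2)) = ((k + 2 : ℚ) * (k + 1)) • uu ^ k := by
  have h1 := uu_ode
  have h2 := uu_sq
  have e : ((k + 2 : ℚ) * (k + 1)) • uu ^ k = ((k : ℚ⟦X⟧) + 2) * (k + 1) * uu ^ k := by
    rw [smul_eq_C_mul]; simp only [map_mul, map_add, map_natCast, map_one, C_two']
  rw [e]
  unfold LLop
  simp only [Derivation.leibniz, smul_eq_mul, Derivation.leibniz_pow, nsmul_eq_mul, Derivation.map_natCast]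
  simp only [show k + 2 - 1 = k + 1 by omega, show k + 1 - 1 = k by omega]
  push_cast
  linear_combination (k + 2) * uu ^ (k + 1) * h1 + (k + 2) * (k + 1) * uu ^ k * h2

open PowerSeries in
theorem q_rec (N k : ℕ) : (N + 2 : ℚ) * (N + 1) * coeff (N + 2) (uu ^ (k + 2)) =
    (k + 2 : ℚ) * (k + 1) * coeff N (uu ^ k) - N ^ 2 * coeff N (uu ^ (k + 2)) := by
  have := congrArg (coeff N) (LL_pow k)
  rw [coeff_LLop, coeff_smul, smul_eq_mul] at this
  linarith

open PowerSeries in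
theorem uu_const : constantCoeff uu = 0 := by
  rw [← coeff_zero_eq_constantCoeff_apply]; simp [uu, asc]

open PowerSeries in
theorem q_odd (n m : ℕ) : coeff (2 * n + 1) (uu ^ (2 * m)) = 0 := by
  induction n generalizing m with
  | zero =>
    cases m with
    | zero => simp [coeff_one]
    | succ m =>
      have : (X : ℚ⟦X⟧) ^ 2 ∣ uu ^ (2 * (m + 1)) := by
        have h : (X : ℚ⟦X⟧) ∣ uu := X_dvd_iff.2 uu_const
        exact (pow_dvd_pow_of_dvd h 2).trans (pow_dvd_pow _ (by omega))
      exact X_pow_dvd_iff.1 this _ (by omega)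
  | succ n ih =>
    cases m with
    | zero => simp [coeff_one]
    | succ m =>
      have := q_rec (2 * n + 1) (2 * m)
      rw [ih, show 2 * m + 2 = 2 * (m + 1) by ring, ih] at this
      simp only [mul_zero, sub_zero] at this
      rw [show 2 * (n + 1) + 1 = 2 * n + 1 + 2 by ring]
      have h0 : (((2 * n + 1 : ℕ) : ℚ) + 2) * (((2 * n + 1 : ℕ) : ℚ) + 1) ≠ 0 := by positivity
      exact (mul_eq_zero.1 this).resolve_left h0

open PowerSeries in
theorem q_even (n m : ℕ) : coeff (2 * n) (uu ^ (2 * m)) =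
    (2 * m).factorial / (2 * n).factorial * ((-4) ^ n / (-4) ^ m * T2 n m) := by
  induction n generalizing m with
  | zero =>
    cases m with
    | zero => simp [T2]
    | succ m => simp [T2, uu_const]
  | succ n ih =>
    cases m with
    | zero => simp [coeff_one, T2]
    | succ m =>
      have := q_rec (2 * n) (2 * m)
      rw [ih, show 2 * m + 2 = 2 * (m + 1) by ring, ih] at this
      rw [show 2 * (n + 1) = 2 * n + 2 by ring] at *
      rw [show 2 * (m + 1) = 2 * m + 2 by ring] at *
      have h0 : (((2 * n : ℕ) : ℚ) + 2) * (((2 * n : ℕ) : ℚ) + 1) ≠ 0 := by positivity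
      apply mul_left_cancel₀ h0
      rw [this]
      simp only [T2, Nat.factorial_succ]
      push_cast
      have := Nat.factorial_ne_zero (2 * n)
      have h4 : ((-4 : ℚ)) ^ m ≠ 0 := by positivity
      field_simp
      ring

theorem T2_zero (n m : ℕ) (h : n < m) : T2 n m = 0 := by
  induction n generalizing m with
  | zero => cases m with
    | zero => omega
    | succ m => rfl
  | succ n ih => cases m with
    | zero => omega
    | succ m => simp [T2, ih m (by omega), ih (m + 1) (by omega)]

noncomputable def shc : PowerSeries ℚ :=
  PowerSeries.mk fun d => if Even d then 1 / ((d + 1).factorial : ℚ) else 0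

noncomputable def Fx : PowerSeries ℚ :=
  PowerSeries.mk fun n => cauchy2 n / ((2 * n).factorial : ℚ)

open PowerSeries in
theorem hs_uu : HasSubst uu := HasSubst.of_constantCoeff_zero' uu_const

open PowerSeries in
theorem coeff_subst_uu (f : ℚ⟦X⟧) (N M : ℕ) (h : N < M) : coeff N (f.subst uu) =
    ∑ d ∈ Finset.range M, coeff d f * coeff N (uu ^ d) := by
  rw [coeff_subst' hs_uu, finsum_eq_sum_of_support_subset]
  · rfl
  · intro d hd
    simp only [Finset.coe_range, Set.mem_Iio]
    by_contra hc
    apply hd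
    have h : (X : ℚ⟦X⟧) ^ d ∣ uu ^ d := pow_dvd_pow_of_dvd (X_dvd_iff.2 uu_const) d
    simp [X_pow_dvd_iff.1 h N (by omega)]

open PowerSeries in
theorem F_eq : shc.subst uu = expand 2 two_ne_zero Fx := by
  ext N
  rcases Nat.even_or_odd' N with ⟨n, rfl | rfl⟩
  · rw [coeff_subst_uu _ _ (2 * (n + 1)) (by omega)]
    have hr : ∀ (g : ℕ → ℚ) (K : ℕ), ∑ d ∈ Finset.range (2 * K), g d =
        ∑ m ∈ Finset.range K, (g (2 * m) + g (2 * m + 1)) := by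
      intro g K
      induction K with
      | zero => simp
      | succ K ih =>
        rw [show 2 * (K + 1) = 2 * K + 1 + 1 by ring, Finset.sum_range_succ, Finset.sum_range_succ,
          ih, Finset.sum_range_succ]; ring
    rw [hr, coeff_expand_mul]
    simp only [Fx, coeff_mk, cauchy2, Finset.sum_div]
    refine Finset.sum_congr rfl fun m hm => ?_
    rw [Finset.mem_range] at hm
    have o : ¬ Even (2 * m + 1) := by simp
    simp only [shc, coeff_mk, o, even_two_mul, if_true, if_false, zero_mul, add_zero]
    rw [q_even]
    have h4 : ((-4 : ℚ)) ^ (n - m) = (-4) ^ n / (-4) ^ m := by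
      rw [eq_div_iff (by positivity), ← pow_add]; congr 1; omega
    rw [h4, Nat.factorial_succ]
    push_cast
    have := Nat.factorial_ne_zero (2 * n)
    have := Nat.factorial_ne_zero (2 * m)
    field_simp
  · rw [coeff_subst_uu _ _ _ (Nat.lt_succ_self _), coeff_expand_of_not_dvd _ _ _ (by omega)]
    refine Finset.sum_eq_zero fun d _ => ?_
    rcases Nat.even_or_odd' d with ⟨m, rfl | rfl⟩
    · rw [q_odd, mul_zero]
    · simp [shc]

open PowerSeries in
theorem uF : uu * shc.subst uu = X := by
  have h0 : uu * shc.subst uu = (X * shc).subst uu := by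
    rw [subst_mul hs_uu, subst_X hs_uu]
  have hd : d⁄dX ℚ (d⁄dX ℚ (X * shc)) = X * shc := by
    ext N
    rw [coeff_derivative, coeff_derivative, coeff_succ_X_mul]
    cases N with
    | zero => simp [shc]
    | succ N =>
      rw [coeff_succ_X_mul]
      simp only [shc, coeff_mk]
      rcases Nat.even_or_odd N with h | h
      · have h' : Even (N + 1 + 1) := by grind
        simp only [h, h', if_true, Nat.factorial_succ]
        push_cast
        have := Nat.factorial_ne_zero N
        field_simp
        ring
      · have h' : ¬ Even (N + 1 + 1) := by grind
        have h'' : ¬ Even N := by grind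
        simp [h'', h']
  have hL : LLop ((X * shc).subst uu) = (X * shc).subst uu := by
    unfold LLop
    simp only [derivative_subst hs_uu, Derivation.leibniz _ (subst uu _), smul_eq_mul, hd]
    linear_combination (subst uu (X * shc)) * uu_sq + (subst uu (d⁄dX ℚ (X * shc))) * uu_ode
  have hc : ∀ N, coeff N ((X * shc).subst uu) = coeff N X ∧
      coeff (N + 1) ((X * shc).subst uu) = coeff (N + 1) X := by
    intro N
    induction N with
    | zero =>
      constructor
      · rw [← h0]; simp [uu_const]
      · rw [coeff_subst_uu _ _ 2 (by omega)]
        simp [Finset.sum_range_succ, shc, uu, asc, coeff_succ_X_mul]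
    | succ N ih =>
      refine ⟨ih.2, ?_⟩
      have := congrArg (coeff N) hL
      rw [coeff_LLop, ih.1] at this
      have h1 : ((N : ℚ) + 2) * (N + 1) ≠ 0 := by positivity
      apply mul_left_cancel₀ h1
      rw [coeff_X] at this ⊢
      rw [if_neg (by omega)]
      have h2 : (1 - (N : ℚ) ^ 2) * (if N = 1 then 1 else 0) = 0 := by
        split_ifs with h
        · subst h; norm_num
        · simp
      rw [show N + 1 + 1 = N + 2 from rfl]
      linear_combination this + h2
  rw [h0]
  ext N
  exact (hc N).1

open PowerSeries in
theorem pow_rec (F : ℚ⟦X⟧) (h : uu * F = X) (N j : ℕ) : ((j + 1 : ℚ) * (j + 2)) * coeff (N + 2) (F ^ (j + 3)) =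
    (N + 1 - j) * (N - j) * coeff (N + 2) (F ^ (j + 1)) + (N - j - 1) ^ 2 * coeff N (F ^ (j + 1)) := by
  set p := d⁄dX ℚ uu with hp
  have h1 : (1 + X ^ 2) * d⁄dX ℚ p = - (X * p) := uu_ode
  have h2 : (1 + X ^ 2) * p ^ 2 = 1 := uu_sq
  have h3 : X * d⁄dX ℚ F = F - p * F ^ 2 := by
    have := congrArg (d⁄dX ℚ) h
    simp only [Derivation.leibniz, derivative_X, smul_eq_mul, ← hp] at this
    linear_combination F * this - d⁄dX ℚ F * h
  have hP : ((j : ℚ⟦X⟧) + 1) * F ^ (j + 1) - X * d⁄dX ℚ (F ^ (j + 1)) = ((j : ℚ⟦X⟧) + 1) * (p * F ^ (j + 2)) := by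
    simp only [Derivation.leibniz_pow, nsmul_eq_mul, smul_eq_mul]
    push_cast
    linear_combination - ((j : ℚ⟦X⟧) + 1) * F ^ j * h3
  set P : ℚ⟦X⟧ := ((j : ℚ⟦X⟧) + 1) * F ^ (j + 1) - X * d⁄dX ℚ (F ^ (j + 1)) with hPd
  have hQ : ((j : ℚ⟦X⟧) + 1) * ((j : ℚ⟦X⟧) + 2) * F ^ (j + 3) =
      (1 + X ^ 2) * (((j : ℚ⟦X⟧) + 2) * P - X * d⁄dX ℚ P) - X ^ 2 * P := by
    rw [hP]
    simp only [Derivation.leibniz, Derivation.leibniz_pow, nsmul_eq_mul, smul_eq_mul,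
      map_add, Derivation.map_one_eq_zero, Derivation.map_natCast]
    push_cast
    linear_combination (1 + X ^ 2) * ((j : ℚ⟦X⟧) + 1) * ((j : ℚ⟦X⟧) + 2) * p * F ^ (j + 1) * h3 + X * ((j : ℚ⟦X⟧) + 1) * F ^ (j + 2) * h1 - ((j : ℚ⟦X⟧) + 1) * ((j : ℚ⟦X⟧) + 2) * F ^ (j + 3) * h2
  have cC : ∀ (a : ℚ) (M : ℕ) (A : ℚ⟦X⟧), coeff M (C a * A) = a * coeff M A := fun a M A => by simp
  have e1 : ((j : ℚ⟦X⟧) + 1) = C ((j : ℚ) + 1) := by simp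
  have e2 : ((j : ℚ⟦X⟧) + 2) = C ((j : ℚ) + 2) := by simp only [map_add, map_natCast, C_two']
  have hc : ∀ M, coeff M P = (j + 1 - M) * coeff M (F ^ (j + 1)) := by
    intro M
    rw [hPd, map_sub, coeff_theta, e1, cC]; ring
  clear_value P
  have := congrArg (coeff (N + 2)) hQ
  rw [add_mul 1 (X ^ 2), one_mul, map_sub, map_add, coeff_X_pow_mul, coeff_X_pow_mul, map_sub, map_sub,
    coeff_theta, coeff_theta, e2, cC, cC, mul_assoc, e1, cC, cC, hc, hc] at this
  push_cast at this
  linear_combination this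


open PowerSeries in
theorem pow_rec_x (n j : ℕ) : ((j + 1 : ℚ) * (j + 2)) * coeff (n + 1) (Fx ^ (j + 3)) =
    (2 * n + 1 - j) * (2 * n - j) * coeff (n + 1) (Fx ^ (j + 1)) + (2 * n - j - 1) ^ 2 * coeff n (Fx ^ (j + 1)) := by
  have := pow_rec (expand 2 two_ne_zero Fx) (by rw [← F_eq]; exact uF) (2 * n) j
  simp only [← map_pow] at this
  rw [show 2 * n + 2 = 2 * (n + 1) by ring] at this
  simp only [coeff_expand_mul] at this
  push_cast at this
  exact this

open PowerSeries in
theorem coeff_pow_tuple (f : ℚ⟦X⟧) (k n : ℕ) : coeff n (f ^ k) =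
    ∑ x ∈ Finset.Nat.antidiagonalTuple k n, ∏ j, coeff (x j) f := by
  have := coeff_prod (fun _ : Fin k => f) n Finset.univ
  rw [Finset.prod_const, Finset.card_univ, Fintype.card_fin] at this
  rw [this]
  refine Finset.sum_bij (fun l _ => (l : Fin k → ℕ)) ?_ ?_ ?_ ?_
  · intro l hl
    rw [Finset.mem_finsuppAntidiag] at hl
    rw [Finset.Nat.mem_antidiagonalTuple]; exact hl.1
  · intro a _ b _ h
    exact DFunLike.coe_injective h
  · intro b hb
    rw [Finset.Nat.mem_antidiagonalTuple] at hb
    exact ⟨Finsupp.equivFunOnFinite.symm b, by rw [Finset.mem_finsuppAntidiag]; exact ⟨hb, by simp⟩, rfl⟩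
  · intro _ _; rfl

theorem ch2 (N : ℕ) : (Nat.choose N 2 : ℚ) = N * (N - 1) / 2 := by
  rw [Nat.cast_choose_two]
theorem ch4 (N : ℕ) : (Nat.choose N 4 : ℚ) = N * (N - 1) * (N - 2) * (N - 3) / 24 := by
  rw [Nat.cast_choose_eq_descPochhammer_div]
  simp [descPochhammer_succ_right, Nat.factorial]
theorem ch6 (N : ℕ) : (Nat.choose N 6 : ℚ) =
    N * (N - 1) * (N - 2) * (N - 3) * (N - 4) * (N - 5) / 720 := by
  rw [Nat.cast_choose_eq_descPochhammer_div]
  simp [descPochhammer_succ_right, Nat.factorial]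

open PowerSeries in
theorem lhs_eq (n : ℕ) : ∑ x ∈ Finset.Nat.antidiagonalTuple 7 n,
        (Nat.multinomial Finset.univ (fun j => 2 * x j) : ℚ) * ∏ j, cauchy2 (x j) =
    (2 * n).factorial * coeff n (Fx ^ 7) := by
  rw [coeff_pow_tuple, Finset.mul_sum]
  refine Finset.sum_congr rfl fun x hx => ?_
  rw [Finset.Nat.mem_antidiagonalTuple] at hx
  have h := Nat.multinomial_spec Finset.univ (fun j => 2 * x j)
  rw [← Finset.mul_sum, hx] at h
  rw [← h]
  simp only [Fx, coeff_mk, Finset.prod_div_distrib]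
  push_cast
  have : (∏ j, ((2 * x j).factorial : ℚ)) ≠ 0 := Finset.prod_ne_zero_iff.2 fun j _ => by positivity
  field_simp

theorem statement8 (n : ℕ) (hn : 3 ≤ n) :
    ∑ x ∈ Finset.Nat.antidiagonalTuple 7 n,
        (Nat.multinomial Finset.univ (fun j => 2 * x j) : ℚ) * ∏ j, cauchy2 (x j) =
    (Nat.choose (2 * n - 1) 6 : ℚ) * cauchy2 n
    + (12 * (n : ℚ) ^ 2 - 60 * (n : ℚ) + 83) / 15 *
        (Nat.choose (2 * n) 2 : ℚ) * (Nat.choose (2 * n - 3) 4 : ℚ) * cauchy2 (n - 1)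
    + (4 * (n : ℚ) ^ 2 - 24 * (n : ℚ) + 39) * (12 * (n : ℚ) ^ 2 - 72 * (n : ℚ) + 109) / 15 *
        (Nat.choose (2 * n) 4 : ℚ) * (Nat.choose (2 * n - 5) 2 : ℚ) * cauchy2 (n - 2)
    + (Nat.choose (2 * n) 6 : ℚ) * (2 * (n : ℚ) - 7) ^ 6 * cauchy2 (n - 3) := by
  rw [lhs_eq]
  obtain ⟨m, rfl⟩ : ∃ m, n = m + 3 := ⟨n - 3, by omega⟩
  have hF : ∀ k, cauchy2 k = (2 * k).factorial * PowerSeries.coeff k (Fx ^ 1) := by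
    intro k
    simp only [Fx, pow_one, PowerSeries.coeff_mk]
    have := Nat.factorial_ne_zero (2 * k)
    field_simp
  have e1 := pow_rec_x (m + 2) 4
  have e2 := pow_rec_x (m + 2) 2
  have e3 := pow_rec_x (m + 1) 2
  have e4 := pow_rec_x (m + 2) 0
  have e5 := pow_rec_x (m + 1) 0
  have e6 := pow_rec_x m 0
  rw [show m + 3 - 1 = m + 2 by omega, show m + 3 - 2 = m + 1 by omega, show m + 3 - 3 = m by omega,
    show 2 * (m + 3) - 1 = 2 * m + 5 by omega, show 2 * (m + 3) - 3 = 2 * m + 3 by omega,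
    show 2 * (m + 3) - 5 = 2 * m + 1 by omega]
  simp only [hF, ch2, ch4, ch6]
  have g1 : PowerSeries.coeff (m + 3) (Fx ^ 7) = ((2 * (m : ℚ) + 1) * (2 * (m : ℚ)) *
      PowerSeries.coeff (m + 3) (Fx ^ 5) + (2 * (m : ℚ) - 1) ^ 2 * PowerSeries.coeff (m + 2) (Fx ^ 5)) / 30 := by
    push_cast at e1
    linear_combination e1 / 30
  have g2 : PowerSeries.coeff (m + 3) (Fx ^ 5) = ((2 * (m : ℚ) + 3) * (2 * (m : ℚ) + 2) *
      PowerSeries.coeff (m + 3) (Fx ^ 3) + (2 * (m : ℚ) + 1) ^ 2 * PowerSeries.coeff (m + 2) (Fx ^ 3)) / 12 := by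
    push_cast at e2
    linear_combination e2 / 12
  have g3 : PowerSeries.coeff (m + 2) (Fx ^ 5) = ((2 * (m : ℚ) + 1) * (2 * (m : ℚ)) *
      PowerSeries.coeff (m + 2) (Fx ^ 3) + (2 * (m : ℚ) - 1) ^ 2 * PowerSeries.coeff (m + 1) (Fx ^ 3)) / 12 := by
    push_cast at e3
    linear_combination e3 / 12
  have g4 : PowerSeries.coeff (m + 3) (Fx ^ 3) = ((2 * (m : ℚ) + 5) * (2 * (m : ℚ) + 4) *
      PowerSeries.coeff (m + 3) (Fx ^ 1) + (2 * (m : ℚ) + 3) ^ 2 * PowerSeries.coeff (m + 2) (Fx ^ 1)) / 2 := by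
    push_cast at e4
    linear_combination e4 / 2
  have g5 : PowerSeries.coeff (m + 2) (Fx ^ 3) = ((2 * (m : ℚ) + 3) * (2 * (m : ℚ) + 2) *
      PowerSeries.coeff (m + 2) (Fx ^ 1) + (2 * (m : ℚ) + 1) ^ 2 * PowerSeries.coeff (m + 1) (Fx ^ 1)) / 2 := by
    push_cast at e5
    linear_combination e5 / 2
  have g6 : PowerSeries.coeff (m + 1) (Fx ^ 3) = ((2 * (m : ℚ) + 1) * (2 * (m : ℚ)) *
      PowerSeries.coeff (m + 1) (Fx ^ 1) + (2 * (m : ℚ) - 1) ^ 2 * PowerSeries.coeff m (Fx ^ 1)) / 2 := by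
    push_cast at e6
    linear_combination e6 / 2
  rw [g1, g2, g3, g4, g5, g6]
  rw [show 2 * (m + 3) = 2 * m + 1 + 1 + 1 + 1 + 1 + 1 by ring,
    show 2 * (m + 2) = 2 * m + 1 + 1 + 1 + 1 by ring, show 2 * (m + 1) = 2 * m + 1 + 1 by ring]
  simp only [Nat.factorial_succ]
  push_cast
  ring
end

section
/- For all integers n ≥ 1 and 1 ≤ m ≤ n, the Stirling numbers of the first kind with level 2 are given in terms of the unsigned Stirling numbers of the first kind by T(n,m) = [n,m]² + 2·∑_{j=1}^{m-1} (-1)^j [n, m-j][n, m+j], i.e. T(n,m) = [n,m]² − 2[n,m-1][n,m+1] + 2[n,m-2][n,m+2] − ⋯ + 2(-1)^{m-1}[n,1][n,2m-1], where [n,k] denotes the unsigned Stirling number of the first kind (with [n,k]=0 for k>n). -/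
/-- Unsigned Stirling numbers of the first kind:
`stirling1 n k = [n, k]`, with `[0,0] = 1` and
`[n, k] = [n-1, k-1] + (n-1)·[n-1, k]`. -/
def stirling1 : ℕ → ℕ → ℕ
  | 0, 0 => 1
  | 0, _ + 1 => 0
  | _ + 1, 0 => 0
  | n + 1, k + 1 => stirling1 n k + n * stirling1 n (k + 1)

open Polynomial in
theorem P_coeff (n k : ℕ) :
    (∏ i ∈ Finset.range n, ((X : ℤ[X]) + C (i : ℤ))).coeff k = stirling1 n k := by
  induction n generalizing k with
  | zero => cases k <;> simp [stirling1, coeff_one]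
  | succ n ih =>
    rw [Finset.prod_range_succ, mul_add, coeff_add, coeff_mul_C, ih]
    cases k with
    | zero =>
      cases n with
      | zero => simp [stirling1]
      | succ n => simp [stirling1]
    | succ k => rw [coeff_mul_X, ih]; simp [stirling1]; ring

open Polynomial in
theorem Q_coeff (n k : ℕ) :
    (∏ i ∈ Finset.range n, (C (i : ℤ) - (X : ℤ[X]))).coeff k = (-1) ^ k * stirling1 n k := by
  induction n generalizing k with
  | zero => cases k <;> simp [stirling1, coeff_one]
  | succ n ih =>
    rw [Finset.prod_range_succ, mul_sub, coeff_sub, coeff_mul_C, ih]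
    cases k with
    | zero =>
      cases n with
      | zero => simp [stirling1]
      | succ n => simp [stirling1]
    | succ k => rw [coeff_mul_X, ih]; simp [stirling1]; ring

open Polynomial in
theorem R_coeff (n k : ℕ) :
    (∏ i ∈ Finset.range n, (C ((i : ℤ) ^ 2) - (X : ℤ[X]) ^ 2)).coeff (2 * k)
      = (-1) ^ k * T2 n k := by
  induction n generalizing k with
  | zero => cases k <;> simp [T2, coeff_one]
  | succ n ih =>
    rw [Finset.prod_range_succ, mul_sub, coeff_sub, coeff_mul_C, ih]
    cases k with
    | zero =>
      cases n with
      | zero => simp [T2, coeff_X_pow]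
      | succ n => simp [T2, coeff_mul_X_pow']
    | succ k =>
      rw [show 2 * (k + 1) = 2 * k + 2 by ring, coeff_mul_X_pow, ih]; simp [T2]; ring

open Polynomial in
theorem conv_eq (n m : ℕ) :
    ∑ k ∈ Finset.range (2 * m + 1), (stirling1 n k : ℤ) * ((-1) ^ (2 * m - k) *
      stirling1 n (2 * m - k)) = (-1) ^ m * T2 n m := by
  rw [← R_coeff]
  have h : (∏ i ∈ Finset.range n, (C ((i : ℤ) ^ 2) - (X : ℤ[X]) ^ 2)) =
      (∏ i ∈ Finset.range n, ((X : ℤ[X]) + C (i : ℤ))) *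
      (∏ i ∈ Finset.range n, (C (i : ℤ) - (X : ℤ[X]))) := by
    rw [← Finset.prod_mul_distrib]
    refine Finset.prod_congr rfl fun i _ => ?_
    rw [C_pow]; ring
  rw [h, coeff_mul, Finset.Nat.sum_antidiagonal_eq_sum_range_succ_mk]
  simp only [P_coeff, Q_coeff]

theorem sum_split (f : ℕ → ℤ) (m : ℕ) (hf : ∀ j ≤ m, f (m - j) = f (m + j)) (h0 : f 0 = 0)
    (hm : 1 ≤ m) :
    ∑ k ∈ Finset.range (2 * m + 1), f k = f m + 2 * ∑ j ∈ Finset.Icc 1 (m - 1), f (m + j) := by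
  obtain ⟨p, rfl⟩ : ∃ p, m = p + 1 := ⟨m - 1, by omega⟩
  have e : Finset.Icc 1 (p + 1 - 1) = Finset.Ico 1 (p + 1) := by ext; simp <;> omega
  have h2 : f (p + 1 + (p + 1)) = 0 := by rw [← hf _ le_rfl]; simpa using h0
  rw [e, Finset.sum_Ico_eq_sum_range, show 2 * (p + 1) + 1 = (p + 1) + (p + 2) by ring,
    Finset.sum_range_add, ← Finset.sum_range_reflect, Finset.sum_range_succ,
    Finset.sum_range_succ' _ (p + 1), Finset.sum_range_succ _ p, h2]
  have : ∀ j ∈ Finset.range p, f (p + 1 - 1 - j) = f (p + 1 + (j + 1)) := by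
    intro j hj
    have := Finset.mem_range.1 hj
    rw [← hf (j + 1) (by omega)]; congr 1; omega
  rw [Finset.sum_congr rfl this]
  simp [h0, add_comm 1]
  ring

theorem statement9 (n m : ℕ) (hm : 1 ≤ m) (hmn : m ≤ n) :
    (T2 n m : ℤ) = (stirling1 n m : ℤ) ^ 2 +
      2 * ∑ j ∈ Finset.Icc 1 (m - 1),
        (-1 : ℤ) ^ j * (stirling1 n (m - j) : ℤ) * (stirling1 n (m + j) : ℤ) := by
  have hn : stirling1 n 0 = 0 := by
    cases n with
    | zero => omega
    | succ n => simp [stirling1]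
  have h := conv_eq n m
  rw [sum_split _ m _ (by simp [hn]) hm] at h
  · have hs : ((-1 : ℤ) ^ m) * (-1) ^ m = 1 := by
      rw [← mul_pow]; simp
    have h3 : (T2 n m : ℤ) = (-1) ^ m * ((-1) ^ m * T2 n m) := by rw [← mul_assoc, hs, one_mul]
    rw [h3, ← h, mul_add, mul_left_comm _ 2, Finset.mul_sum]
    congr 1
    · rw [show 2 * m - m = m by omega]
      linear_combination (stirling1 n m : ℤ) ^ 2 * hs
    · congr 1
      refine Finset.sum_congr rfl fun j hj => ?_
      have := Finset.mem_Icc.1 hj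
      rw [show 2 * m - (m + j) = m - j by omega]
      have : (-1 : ℤ) ^ m * (-1) ^ (m - j) = (-1) ^ j := by
        rw [← pow_add, show m + (m - j) = 2 * (m - j) + j by omega, pow_add, pow_mul]; simp
      linear_combination (stirling1 n (m - j) : ℤ) * (stirling1 n (m + j) : ℤ) * this
  · intro j hj
    rw [show 2 * m - (m - j) = m + j by omega, show 2 * m - (m + j) = m - j by omega]
    have : (-1 : ℤ) ^ (m + j) = (-1) ^ (m - j) := by
      rw [show m + j = 2 * j + (m - j) by omega, pow_add, pow_mul]; simp
    rw [this]; ring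
end

section
/- For every integer m ≥ 0 and every real number t with |t| < 1, (arsinh t)^{2m}/(2m)! = ∑_{n=m}^∞ (-4)^{n-m} T(n,m) · t^{2n}/(2n)!. -/
namespace S11

lemma T2_bound (m n : ℕ) : 4 ^ n * T2 n m ≤ 8 ^ m * (2 * n).factorial := by
  induction n generalizing m with
  | zero => cases m <;> simp [T2]
  | succ n ih =>
    cases m with
    | zero => simp [T2]
    | succ m =>
      have h1 := ih m
      have h2 := ih (m + 1)
      have e : (2 * (n + 1)).factorial = (2 * n + 2) * ((2 * n + 1) * (2 * n).factorial) := by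
        rw [show 2 * (n + 1) = 2 * n + 1 + 1 by ring, Nat.factorial_succ, Nat.factorial_succ]
      rw [e, T2]
      calc 4 ^ (n + 1) * (T2 n m + n ^ 2 * T2 n (m + 1))
          = 4 * (4 ^ n * T2 n m) + 4 * n ^ 2 * (4 ^ n * T2 n (m + 1)) := by ring
        _ ≤ 4 * (8 ^ m * (2 * n).factorial)
            + 4 * n ^ 2 * (8 ^ (m + 1) * (2 * n).factorial) := by gcongr
        _ = (8 ^ m * (2 * n).factorial) * (4 + 32 * n ^ 2) := by ring
        _ ≤ (8 ^ m * (2 * n).factorial) * (8 * ((2 * n + 2) * (2 * n + 1))) := by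
            gcongr; nlinarith
        _ = _ := by ring

noncomputable def c (m n : ℕ) : ℝ := (-4) ^ n / (-4) ^ m * (T2 n m : ℝ) / ((2 * n).factorial : ℝ)

lemma c_bound (m n : ℕ) : |c m n| ≤ 8 ^ m := by
  have h : ((4 ^ n * T2 n m : ℕ) : ℝ) ≤ ((8 ^ m * (2 * n).factorial : ℕ) : ℝ) := by
    exact_mod_cast T2_bound m n
  push_cast at h
  have hf : (0 : ℝ) < ((2 * n).factorial : ℝ) := by positivity
  unfold c
  rw [abs_div, abs_mul, abs_div, abs_pow, abs_pow, abs_neg, Nat.abs_ofNat, Nat.abs_cast,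
    Nat.abs_cast, div_le_iff₀ hf, div_mul_eq_mul_div]
  refine (div_le_self (by positivity) (one_le_pow₀ (by norm_num))).trans h

lemma c_rec (m n : ℕ) : c (m + 1) (n + 1) * ((2 * n + 2) * (2 * n + 1)) + 4 * n ^ 2 * c (m + 1) n
    = c m n := by
  have e : ((2 * (n + 1)).factorial : ℝ) = (2 * n + 2) * ((2 * n + 1) * (2 * n).factorial) := by
    rw [show 2 * (n + 1) = 2 * n + 1 + 1 by ring, Nat.factorial_succ, Nat.factorial_succ]
    push_cast; ring
  have hf : ((2 * n).factorial : ℝ) ≠ 0 := by positivity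
  have h1 : (2 * n + 2 : ℝ) ≠ 0 := by positivity
  have h2 : (2 * n + 1 : ℝ) ≠ 0 := by positivity
  have h4 : ((-4 : ℝ)) ^ m ≠ 0 := by positivity
  unfold c
  rw [e, T2]
  push_cast
  rw [pow_succ, pow_succ]
  field_simp
  ring

lemma T2_zero (n m : ℕ) (h : n < m) : T2 n m = 0 := by
  induction n generalizing m with
  | zero => cases m with
    | zero => omega
    | succ m => simp [T2]
  | succ n ih => cases m with
    | zero => omega
    | succ m => simp [T2, ih m (by omega), ih (m + 1) (by omega)]

lemma maj_summable (r K : ℝ) (hr : 0 < r) (hr1 : r < 1) (p : ℕ) :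
    Summable fun n : ℕ => K * ((n : ℝ) + 1) ^ p * (r ^ n / r ^ 2) := by
  have h := summable_pow_mul_geometric_of_norm_lt_one (R := ℝ) p (r := r)
    (by rwa [Real.norm_of_nonneg hr.le])
  have h' := ((summable_nat_add_iff 1).2 h).mul_left (K / r ^ 3)
  refine h'.congr fun n => ?_
  push_cast
  rw [pow_succ r n]
  field_simp

lemma pow_maj (r y : ℝ) (hr : 0 < r) (hr1 : r < 1) (hy : |y| ≤ r) (e n : ℕ) (h : n ≤ e + 2) :
    |y ^ e| ≤ r ^ n / r ^ 2 := by
  rw [le_div_iff₀ (by positivity), abs_pow]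
  calc |y| ^ e * r ^ 2 ≤ r ^ e * r ^ 2 := by gcongr
    _ = r ^ (e + 2) := by ring
    _ ≤ r ^ n := pow_le_pow_of_le_one hr.le hr1.le h

lemma exr (t : ℝ) (ht : |t| < 1) : ∃ r, 0 < r ∧ r < 1 ∧ |t| < r := by
  obtain ⟨r, h1, h2⟩ := exists_between ht
  exact ⟨r, (abs_nonneg t).trans_lt h1, h2, h1⟩

lemma ser_summable (a : ℕ → ℝ) (e : ℕ → ℕ) (K : ℝ) (p : ℕ)
    (ha : ∀ n, |a n| ≤ K * ((n : ℝ) + 1) ^ p) (he : ∀ n, n ≤ e n + 2) (t : ℝ) (ht : |t| < 1) :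
    Summable fun n => a n * t ^ e n := by
  obtain ⟨r, hr, hr1, htr⟩ := exr t ht
  refine Summable.of_norm_bounded (maj_summable r K hr hr1 p) fun n => ?_
  rw [Real.norm_eq_abs, abs_mul]
  exact mul_le_mul (ha n) (pow_maj r t hr hr1 htr.le _ _ (he n)) (abs_nonneg _)
    ((abs_nonneg _).trans (ha n))

lemma ser_deriv (a : ℕ → ℝ) (e : ℕ → ℕ) (K : ℝ) (p : ℕ)
    (ha : ∀ n, |a n * e n| ≤ K * ((n : ℝ) + 1) ^ p) (he : ∀ n, n ≤ (e n - 1) + 2)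
    (h0 : Summable fun n => a n * (0 : ℝ) ^ e n)
    (t : ℝ) (ht : |t| < 1) :
    HasDerivAt (fun x => ∑' n, a n * x ^ e n) (∑' n, a n * e n * t ^ (e n - 1)) t := by
  obtain ⟨r, hr, hr1, htr⟩ := exr t ht
  refine hasDerivAt_tsum_of_isPreconnected (t := Metric.ball (0 : ℝ) r) (y₀ := 0)
    (maj_summable r K hr hr1 p) Metric.isOpen_ball (convex_ball _ _).isPreconnected
    (g := fun n x => a n * x ^ e n) (g' := fun n x => a n * e n * x ^ (e n - 1))
    ?_ ?_ (Metric.mem_ball_self hr) h0 (by simpa using htr)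
  · intro n y hy
    simpa [mul_assoc] using (hasDerivAt_pow (e n) y).const_mul (a n)
  · intro n y hy
    have hy' : |y| < r := by simpa using hy
    rw [Real.norm_eq_abs, abs_mul]
    exact mul_le_mul (ha n) (pow_maj r y hr hr1 hy'.le _ _ (he n)) (abs_nonneg _)
      ((abs_nonneg _).trans (ha n))

noncomputable def g (m : ℕ) (t : ℝ) : ℝ := ∑' n, c m n * t ^ (2 * n)
noncomputable def g1 (m : ℕ) (t : ℝ) : ℝ := ∑' n, c m n * (2 * n : ℕ) * t ^ (2 * n - 1)
noncomputable def g2 (m : ℕ) (t : ℝ) : ℝ :=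
  ∑' n, c m n * (2 * n : ℕ) * (2 * n - 1 : ℕ) * t ^ (2 * n - 1 - 1)

lemma b0 (m n : ℕ) : |c m n| ≤ (4 * 8 ^ m) * ((n : ℝ) + 1) ^ 0 := by
  have := c_bound m n
  have : (0 : ℝ) < 8 ^ m := by positivity
  simp; linarith

lemma b1 (m n : ℕ) : |c m n * (2 * n : ℕ)| ≤ (4 * 8 ^ m) * ((n : ℝ) + 1) ^ 1 := by
  rw [abs_mul, Nat.abs_cast, pow_one]
  have := c_bound m n
  calc |c m n| * (2 * n : ℕ) ≤ 8 ^ m * (4 * (n + 1)) := by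
        gcongr; push_cast; linarith
    _ = _ := by ring

lemma b2 (m n : ℕ) :
    |c m n * (2 * n : ℕ) * (2 * n - 1 : ℕ)| ≤ (4 * 8 ^ m) * ((n : ℝ) + 1) ^ 2 := by
  rw [abs_mul, abs_mul, Nat.abs_cast, Nat.abs_cast]
  have := c_bound m n
  have h : ((2 * n - 1 : ℕ) : ℝ) ≤ 2 * (n + 1) := by
    have : 2 * n - 1 ≤ 2 * (n + 1) := by omega
    exact_mod_cast this
  calc |c m n| * (2 * n : ℕ) * (2 * n - 1 : ℕ) ≤ 8 ^ m * (2 * (n + 1)) * (2 * (n + 1)) := by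
        gcongr; push_cast; linarith
    _ = _ := by ring

lemma g_deriv (m : ℕ) (t : ℝ) (ht : |t| < 1) : HasDerivAt (g m) (g1 m t) t :=
  ser_deriv (c m) (fun n => 2 * n) _ 1 (b1 m) (fun n => by omega)
    (ser_summable _ _ _ 0 (b0 m) (fun n => by omega) 0 (by simp)) t ht

lemma g1_deriv (m : ℕ) (t : ℝ) (ht : |t| < 1) : HasDerivAt (g1 m) (g2 m t) t :=
  ser_deriv (fun n => c m n * (2 * n : ℕ)) (fun n => 2 * n - 1) _ 2 (b2 m) (fun n => by omega)
    (ser_summable _ _ _ 1 (b1 m) (fun n => by omega) 0 (by simp)) t ht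

lemma g_ode (m : ℕ) (t : ℝ) (ht : |t| < 1) :
    (1 + t ^ 2) * g2 (m + 1) t + t * g1 (m + 1) t = g m t := by
  have s1 := ser_summable _ (fun n => 2 * n - 1) _ 1 (b1 (m + 1)) (fun n => by omega) t ht
  have s2 := ser_summable _ (fun n => 2 * n - 1 - 1) _ 2 (b2 (m + 1)) (fun n => by omega) t ht
  have e2 := s2.tsum_eq_zero_add
  have s2' := (summable_nat_add_iff 1).2 s2
  have : (1 + t ^ 2) * g2 (m + 1) t = g2 (m + 1) t + t ^ 2 * g2 (m + 1) t := by ring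
  rw [this]
  nth_rw 1 [g2]
  rw [e2, g2, g1, ← tsum_mul_left, ← tsum_mul_left]
  simp only [Nat.mul_zero, Nat.cast_zero, mul_zero, zero_mul, zero_add]
  rw [← s2'.tsum_add (s2.mul_left _),
    ← (s2'.add (s2.mul_left _)).tsum_add (s1.mul_left _), g]
  refine tsum_congr fun n => ?_
  rw [← c_rec m n]
  rw [show 2 * (n + 1) - 1 - 1 = 2 * n by omega, show 2 * (n + 1) - 1 = 2 * n + 1 by omega]
  rcases n with _ | n
  · simp
  · rw [show 2 * (n + 1) - 1 - 1 = 2 * n by omega, show 2 * (n + 1) - 1 = 2 * n + 1 by omega]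
    push_cast
    ring

lemma g_zero (m : ℕ) : g (m + 1) 0 = 0 := by
  unfold g
  rw [← tsum_zero (β := ℕ)]
  refine tsum_congr fun n => ?_
  cases n <;> simp [c, T2]

lemma g1_zero (m : ℕ) : g1 m 0 = 0 := by
  unfold g1
  rw [← tsum_zero (β := ℕ)]
  refine tsum_congr fun n => ?_
  cases n with
  | zero => simp
  | succ n => rw [show 2 * (n + 1) - 1 = 2 * n + 1 by omega]; simp

lemma const0 (f : ℝ → ℝ) (hf : ∀ t, |t| < 1 → HasDerivAt f 0 t) (h0 : f 0 = 0) (t : ℝ)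
    (ht : |t| < 1) : f t = 0 := by
  have h := Metric.isOpen_ball.is_const_of_deriv_eq_zero (s := Metric.ball (0 : ℝ) 1) (f := f)
    (convex_ball _ _).isPreconnected
    (fun x hx => (hf x (by simpa using hx)).differentiableAt.differentiableWithinAt)
    (fun x hx => (hf x (by simpa using hx)).deriv)
    (x := t) (y := 0) (by simpa using ht) (by simp)
  rw [h, h0]

lemma A_deriv (k : ℕ) (t : ℝ) :
    HasDerivAt (fun x => Real.arsinh x ^ (k + 1) / ((k + 1).factorial : ℝ))
      (Real.arsinh t ^ k / (k.factorial : ℝ) * (√(1 + t ^ 2))⁻¹) t := by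
  have h := ((Real.hasDerivAt_arsinh t).pow (k + 1)).div_const ((k + 1).factorial : ℝ)
  refine h.congr_deriv ?_
  have : (k.factorial : ℝ) ≠ 0 := by positivity
  rw [Nat.factorial_succ]
  push_cast
  field_simp

lemma main (m : ℕ) : ∀ t : ℝ, |t| < 1 →
    Real.arsinh t ^ (2 * m) / ((2 * m).factorial : ℝ) = g m t := by
  induction m with
  | zero =>
    intro t ht
    unfold g
    rw [tsum_eq_single 0]
    · simp [c, T2]
    · intro n hn
      cases n with
      | zero => simp at hn
      | succ n => simp [c, T2]
  | succ m ih =>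
    have hs : ∀ t : ℝ, 0 < √(1 + t ^ 2) := fun t => by positivity
    have hd : ∀ t : ℝ, HasDerivAt (fun x => √(1 + x ^ 2)) (t * (√(1 + t ^ 2))⁻¹) t := fun t => by
      have h := (((hasDerivAt_id t).pow 2).const_add 1).sqrt (by simp; positivity)
      refine h.congr_deriv ?_
      simp
      field_simp
    have h1 : ∀ t : ℝ, |t| < 1 → √(1 + t ^ 2) * g1 (m + 1) t -
        Real.arsinh t ^ (2 * m + 1) / ((2 * m + 1).factorial : ℝ) = 0 := by
      refine const0 _ ?_ (by simp [g1_zero])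
      intro t ht
      refine (((hd t).mul (g1_deriv (m + 1) t ht)).sub (A_deriv (2 * m) t)).congr_deriv ?_
      rw [ih t ht, ← g_ode m t ht]
      have := hs t
      have hq : √(1 + t ^ 2) ^ 2 = 1 + t ^ 2 := Real.sq_sqrt (by positivity)
      set q := √(1 + t ^ 2)
      rw [← hq]
      field_simp
      ring
    have h2 : ∀ t : ℝ, |t| < 1 → g (m + 1) t -
        Real.arsinh t ^ (2 * m + 1 + 1) / ((2 * m + 1 + 1).factorial : ℝ) = 0 := by
      refine const0 _ ?_ (by simp [g_zero])
      intro t ht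
      refine ((g_deriv (m + 1) t ht).sub (A_deriv (2 * m + 1) t)).congr_deriv ?_
      have h := h1 t ht
      have := hs t
      rw [← sub_eq_zero.1 h]
      field_simp
      ring
    intro t ht
    exact (sub_eq_zero.1 (h2 t ht)).symm

end S11

/-- `(arsinh t)^{2m}/(2m)! = ∑_{n=m}^∞ (-4)^{n-m} T(n,m) t^{2n}/(2n)!`
(the sum over `n ≥ m` is written via the substitution `n = m + i`). -/
theorem statement11 (m : ℕ) (t : ℝ) (ht : |t| < 1) :
    (Real.arsinh t) ^ (2 * m) / (Nat.factorial (2 * m) : ℝ) =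
    ∑' i : ℕ, (-4 : ℝ) ^ i * (T2 (m + i) m : ℝ) *
        t ^ (2 * (m + i)) / (Nat.factorial (2 * (m + i)) : ℝ) := by
  rw [S11.main m t ht, S11.g]
  have s := S11.ser_summable _ (fun n => 2 * n) _ 0 (S11.b0 m) (fun n => by omega) t ht
  rw [← s.sum_add_tsum_nat_add m, Finset.sum_eq_zero, zero_add]
  · refine tsum_congr fun i => ?_
    have h4 : ((-4 : ℝ)) ^ m ≠ 0 := pow_ne_zero _ (by norm_num)
    rw [S11.c, add_comm i m, pow_add]
    field_simp
  · intro n hn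
    simp [S11.c, S11.T2_zero n m (Finset.mem_range.1 hn)]
end

section
/- Let L(t) = t/arsinh(t) for real t ≠ 0. Then for every real t ≠ 0, L(t)³ = (1 + t²/2)·L(t) − (t + t³/2)·L'(t) + (t²(1+t²)/2)·L''(t). -/
/-- `L t = t / arsinh t`. -/
noncomputable def Lfun : ℝ → ℝ := fun t => t / Real.arsinh t

/-- First derivative of `Lfun`. -/
theorem Lfun_hasDerivAt (x : ℝ) (hx : x ≠ 0) :
    HasDerivAt Lfun ((Real.arsinh x)⁻¹ - x / (√(1 + x ^ 2) * Real.arsinh x ^ 2)) x := by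
  have hA : Real.arsinh x ≠ 0 := fun h => hx (Real.arsinh_eq_zero_iff.1 h)
  have hs : √(1 + x ^ 2) ≠ 0 := by positivity
  have h := (hasDerivAt_id' x).div (Real.hasDerivAt_arsinh x) hA
  refine h.congr_deriv ?_
  field_simp

theorem statement13 (t : ℝ) (ht : t ≠ 0) :
    Lfun t ^ 3 = (1 + t ^ 2 / 2) * Lfun t - (t + t ^ 3 / 2) * deriv Lfun t +
      t ^ 2 * (1 + t ^ 2) / 2 * iteratedDeriv 2 Lfun t := by
  have hA : Real.arsinh t ≠ 0 := fun h => ht (Real.arsinh_eq_zero_iff.1 h)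
  have hp : (0:ℝ) < 1 + t ^ 2 := by positivity
  have hs : √(1 + t ^ 2) ≠ 0 := by positivity
  have hev : deriv Lfun =ᶠ[nhds t]
      fun x => (Real.arsinh x)⁻¹ - x / (√(1 + x ^ 2) * Real.arsinh x ^ 2) := by
    filter_upwards [isOpen_ne.mem_nhds ht] with x hx
    exact (Lfun_hasDerivAt x hx).deriv
  have hsd : HasDerivAt (fun x : ℝ => √(1 + x ^ 2)) (t / √(1 + t ^ 2)) t := by
    have h := (((hasDerivAt_id' t).pow 2).const_add 1).sqrt hp.ne'
    refine h.congr_deriv ?_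
    simp
    field_simp
  have hAd := Real.hasDerivAt_arsinh t
  have h2 := (hAd.inv hA).sub ((hasDerivAt_id' t).div (hsd.mul (hAd.pow 2))
    (mul_ne_zero hs (pow_ne_zero 2 hA)))
  have e2 : deriv (deriv Lfun) t = _ := hev.deriv_eq.trans h2.deriv
  have hsq : √(1 + t ^ 2) ^ 2 = 1 + t ^ 2 := Real.sq_sqrt hp.le
  rw [iteratedDeriv_succ, iteratedDeriv_one, e2, (Lfun_hasDerivAt t ht).deriv]
  simp only [Lfun, Pi.mul_apply, Pi.pow_apply]
  generalize √(1 + t ^ 2) = s at *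
  generalize Real.arsinh t = A at *
  rw [← hsq]
  have ht2 : t ^ 2 = s ^ 2 - 1 := by linarith
  field_simp
  simp
  grind
end

section
/- Let L(t) = t/arsinh(t) for real t ≠ 0. Then for every real t ≠ 0, L(t)⁴ = ((6+t²)√(1+t²)/6)·L(t) − (t(6+t²)√(1+t²)/6)·L'(t) + (t²√(1+t²)/2)·L''(t) − ((t³+t⁵)√(1+t²)/6)·L'''(t). -/
lemma aux_u (x : ℝ) (hx : x ≠ 0) : HasDerivAt (fun y => (Real.arsinh y)⁻¹)
    (-((Real.arsinh x)⁻¹ ^ 2 * (√(1 + x ^ 2))⁻¹)) x := by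
  have ha : Real.arsinh x ≠ 0 := fun h => hx (Real.arsinh_eq_zero_iff.1 h)
  refine ((Real.hasDerivAt_arsinh x).inv ha).congr_deriv ?_
  field_simp

lemma aux_v (x : ℝ) : HasDerivAt (fun y : ℝ => (√(1 + y ^ 2))⁻¹)
    (-(x * (√(1 + x ^ 2))⁻¹ ^ 3)) x := by
  have h0 : (1 + x ^ 2 : ℝ) ≠ 0 := by positivity
  have hs : √(1 + x ^ 2) ≠ 0 := by positivity
  have h1 : HasDerivAt (fun y : ℝ => 1 + y ^ 2) (2 * x) x := by
    simpa using (hasDerivAt_pow 2 x).const_add 1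
  refine ((h1.sqrt h0).inv hs).congr_deriv ?_
  field_simp

lemma aux_1 (x : ℝ) (hx : x ≠ 0) : HasDerivAt Lfun
    ((Real.arsinh x)⁻¹ - x * ((Real.arsinh x)⁻¹ ^ 2 * (√(1 + x ^ 2))⁻¹)) x := by
  have h : HasDerivAt (fun y => y * (Real.arsinh y)⁻¹) _ x := (hasDerivAt_id' x).mul (aux_u x hx)
  have e : Lfun = fun y => y * (Real.arsinh y)⁻¹ := by
    funext y
    exact div_eq_mul_inv _ _
  rw [e]
  refine h.congr_deriv ?_
  ring

lemma aux_2 (x : ℝ) (hx : x ≠ 0) : HasDerivAt (fun y =>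
    (Real.arsinh y)⁻¹ - y * ((Real.arsinh y)⁻¹ ^ 2 * (√(1 + y ^ 2))⁻¹))
    (-2 * ((Real.arsinh x)⁻¹ ^ 2 * (√(1 + x ^ 2))⁻¹)
      + 2 * (x * ((Real.arsinh x)⁻¹ ^ 3 * (√(1 + x ^ 2))⁻¹ ^ 2))
      + x ^ 2 * ((Real.arsinh x)⁻¹ ^ 2 * (√(1 + x ^ 2))⁻¹ ^ 3)) x := by
  have hu := aux_u x hx
  have hv := aux_v x
  refine (hu.sub ((hasDerivAt_id' x).mul ((hu.pow 2).mul hv))).congr_deriv ?_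
  simp only [Pi.pow_apply, Pi.mul_apply]
  push_cast
  ring

lemma aux_3 (x : ℝ) (hx : x ≠ 0) : HasDerivAt (fun x =>
    -2 * ((Real.arsinh x)⁻¹ ^ 2 * (√(1 + x ^ 2))⁻¹)
      + 2 * (x * ((Real.arsinh x)⁻¹ ^ 3 * (√(1 + x ^ 2))⁻¹ ^ 2))
      + x ^ 2 * ((Real.arsinh x)⁻¹ ^ 2 * (√(1 + x ^ 2))⁻¹ ^ 3))
    ((Real.arsinh x)⁻¹ ^ 2 * (4 * x * (√(1 + x ^ 2))⁻¹ ^ 3 - 3 * x ^ 3 * (√(1 + x ^ 2))⁻¹ ^ 5)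
      + (Real.arsinh x)⁻¹ ^ 3 * (6 * (√(1 + x ^ 2))⁻¹ ^ 2 - 6 * x ^ 2 * (√(1 + x ^ 2))⁻¹ ^ 4)
      - 6 * x * (Real.arsinh x)⁻¹ ^ 4 * (√(1 + x ^ 2))⁻¹ ^ 3) x := by
  have hu := aux_u x hx
  have hv := aux_v x
  refine (((((hu.pow 2).mul hv).const_mul (-2)).add
    (((hasDerivAt_id' x).mul ((hu.pow 3).mul (hv.pow 2))).const_mul 2)).add
    ((hasDerivAt_pow 2 x).mul ((hu.pow 2).mul (hv.pow 3)))).congr_deriv ?_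
  simp only [Pi.pow_apply, Pi.mul_apply]
  push_cast
  ring

theorem statement14 (t : ℝ) (ht : t ≠ 0) :
    Lfun t ^ 4 = (6 + t ^ 2) * Real.sqrt (1 + t ^ 2) / 6 * Lfun t
      - t * (6 + t ^ 2) * Real.sqrt (1 + t ^ 2) / 6 * deriv Lfun t
      + t ^ 2 * Real.sqrt (1 + t ^ 2) / 2 * iteratedDeriv 2 Lfun t
      - (t ^ 3 + t ^ 5) * Real.sqrt (1 + t ^ 2) / 6 * iteratedDeriv 3 Lfun t := by
  have e1 : ∀ x : ℝ, x ≠ 0 → deriv Lfun =ᶠ[nhds x] _ := fun x hx =>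
    (isOpen_ne.eventually_mem hx).mono (fun y hy => (aux_1 y hy).deriv)
  have d2 : ∀ x : ℝ, x ≠ 0 → iteratedDeriv 2 Lfun x = _ := fun x hx => by
    exact (congrFun iteratedDeriv_succ x).trans ((congrArg (fun g => deriv g x)
      iteratedDeriv_one).trans ((e1 x hx).deriv_eq.trans (aux_2 x hx).deriv))
  have d3 := (congrFun (iteratedDeriv_succ (n := 2) (f := Lfun)) t).trans
      ((Filter.EventuallyEq.deriv_eq ((isOpen_ne.eventually_mem ht).mono d2)).trans
      (aux_3 t ht).deriv)
  norm_num only at d3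
  rw [d3, d2 t ht, (aux_1 t ht).deriv]
  have hL : Lfun t = t * (Real.arsinh t)⁻¹ := div_eq_mul_inv _ _
  rw [hL]
  have hs : √(1 + t ^ 2) ≠ 0 := by positivity
  have hq : √(1 + t ^ 2) ^ 2 = 1 + t ^ 2 := Real.sq_sqrt (by positivity)
  generalize (Real.arsinh t)⁻¹ = u
  generalize √(1 + t ^ 2) = s at *
  have h5 : t ^ 3 + t ^ 5 = t ^ 3 * s ^ 2 := by rw [hq]; ring
  rw [h5]
  have ht2 : t ^ 2 = s ^ 2 - 1 := by linarith
  have ht3 : t ^ 3 = t * (s ^ 2 - 1) := by rw [← ht2]; ring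
  have ht4 : (t * u) ^ 4 = (s ^ 2 - 1) ^ 2 * u ^ 4 := by rw [← ht2]; ring
  rw [ht4, ht3, ht2]
  field_simp
  ring_nf
  have ht4' : t ^ 4 = (s ^ 2 - 1) ^ 2 := by rw [← ht2]; ring
  simp only [ht4', ht3, ht2]
  ring
end

section
/- For every integer n ≥ 1, T(n,2) = ((n-1)!)² · H^{(2)}_{n-1}, where H^{(2)}_{n-1} = ∑_{j=1}^{n-1} 1/j² is the generalized harmonic number of order 2 (with the empty sum equal to 0 when n = 1). -/
theorem T2_one (k : ℕ) : T2 (k + 1) 1 = (Nat.factorial k) ^ 2 := by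
  induction k with
  | zero => simp [T2]
  | succ k ih =>
    have h : T2 (k + 1 + 1) 1 = T2 (k + 1) 0 + (k + 1) ^ 2 * T2 (k + 1) 1 := by
      rw [T2.eq_4]
    rw [h, ih, T2, Nat.factorial_succ]
    ring

theorem T2_two (k : ℕ) : (T2 (k + 1) 2 : ℚ) = (Nat.factorial k : ℚ) ^ 2 *
      ∑ j ∈ Finset.Icc 1 k, 1 / (j : ℚ) ^ 2 := by
  induction k with
  | zero => simp [T2]
  | succ k ih =>
    have h : T2 (k + 1 + 1) 2 = T2 (k + 1) 1 + (k + 1) ^ 2 * T2 (k + 1) 2 := by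
      rw [T2]
    rw [h, T2_one, Finset.sum_Icc_succ_top (by omega), Nat.factorial_succ]
    push_cast
    rw [ih]
    have : (k : ℚ) + 1 ≠ 0 := by positivity
    field_simp
    ring

theorem statement17 (n : ℕ) (hn : 1 ≤ n) :
    (T2 n 2 : ℚ) = (Nat.factorial (n - 1) : ℚ) ^ 2 *
      ∑ j ∈ Finset.Icc 1 (n - 1), 1 / (j : ℚ) ^ 2 := by
  obtain ⟨k, rfl⟩ := Nat.exists_eq_add_of_le' hn
  simpa only [Nat.add_sub_cancel] using T2_two k
end

section
/- For every integer n ≥ 1, T(n, n-1) = (1/4)·binom(2n, 3), where binom denotes the binomial coefficient. -/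
theorem T2_above (n : ℕ) : ∀ m, n < m → T2 n m = 0 := by
  induction n with
  | zero => intro m h; cases m with
    | zero => omega
    | succ m => simp [T2]
  | succ n ih => intro m h; cases m with
    | zero => omega
    | succ m => simp [T2, ih m (by omega), ih (m + 1) (by omega)]

theorem T2_diag (n : ℕ) : T2 n n = 1 := by
  induction n with
  | zero => simp [T2]
  | succ n ih => simp [T2, ih, T2_above n (n + 1) (by omega)]

theorem T2_sub (n : ℕ) : 6 * T2 (n + 1) n = n * (n + 1) * (2 * n + 1) := by
  induction n with
  | zero => simp [T2]
  | succ n ih =>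
    rw [T2, T2_diag, mul_add, ih]
    ring

theorem choose_aux (n : ℕ) :
    6 * Nat.choose (2 * (n + 1)) 3 = (2 * n + 2) * (2 * n + 1) * (2 * n) := by
  have h := Nat.descFactorial_eq_factorial_mul_choose (2 * n + 2) 3
  simp only [Nat.descFactorial_succ, Nat.descFactorial_zero, Nat.factorial] at h
  have e : 2 * n + 2 - 2 = 2 * n := by omega
  have e1 : 2 * n + 2 - 1 = 2 * n + 1 := by omega
  rw [e, e1] at h
  have e2 : 2 * (n + 1) = 2 * n + 2 := by ring
  rw [e2]
  simp only [Nat.sub_zero] at h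
  linarith

theorem statement18 (n : ℕ) (hn : 1 ≤ n) :
    (T2 n (n - 1) : ℚ) = 1 / 4 * (Nat.choose (2 * n) 3 : ℚ) := by
  obtain ⟨k, rfl⟩ : ∃ k, n = k + 1 := ⟨n - 1, by omega⟩
  have h1 : (6 * T2 (k + 1) k : ℚ) = k * (k + 1) * (2 * k + 1) := by
    exact_mod_cast T2_sub k
  have h2 : (6 * Nat.choose (2 * (k + 1)) 3 : ℚ) = (2 * k + 2) * (2 * k + 1) * (2 * k) := by
    exact_mod_cast choose_aux k
  rw [Nat.add_sub_cancel]
  linarith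
end
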